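/- Let X and Y be regular topological spaces, let μ be a τ-additive Borel probability measure on X and ν a τ-additive Borel probability measure on Y. Then for every Borel set W ⊆ X × Y, the maps x ↦ ν(W_x) and y ↦ μ(W^y) are Borel measurable and ∫_X ν(W_x) dμ(x) = ∫_Y μ(W^y) dν(y), where W_x = {y ∈ Y : (x,y) ∈ W} and W^y = {x ∈ X : (x,y) ∈ W}. -/

import Mathlib

/-!
Only open sets need real work: open sets form a π-system generating the Borel σ-algebra of
`X × Y`, and the sets satisfying the conclusion form a λ-system.

Let `W` be open. By τ-additivity of `ν`, whenever `c < ν W_x` there is an open rectangle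
`U × V ⊆ W` with `x ∈ U` and `c < ν V` (`exists_rectangle`); hence `x ↦ ν W_x` is lower
semicontinuous. By τ-additivity of `μ`, for each rational `c` countably many of the sets `U` cover
`{x | c < ν W_x}` up to a `μ`-null set (`exists_countable_cover`). The union of all the
corresponding rectangles is a subset `R` of `W` lying in the *product σ-algebra*, with
`ν W_x ≤ ν R_x` for `μ`-almost every `x` (`exists_measurable_subset`). Joining `R` with the set
obtained by exchanging the roles of `X` and `Y`, both iterated integrals of `W` agree with those
of one set to which the classical Fubini–Tonelli theorem applies.
-/

open MeasureTheory

/-- A Borel (probability) measure is τ-additive if for every nonempty upwards-directed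
family of open sets, the measure of the union is the supremum of the measures. -/
def TauAdditive {X : Type*} [TopologicalSpace X] [MeasurableSpace X]
    (μ : Measure X) : Prop :=
  ∀ 𝒢 : Set (Set X), 𝒢.Nonempty → (∀ U ∈ 𝒢, IsOpen U) → DirectedOn (· ⊆ ·) 𝒢 →
    μ (⋃₀ 𝒢) = ⨆ U ∈ 𝒢, μ U

namespace TauAdditive

/-- A family of open sets has a countable subfamily with the same union up to a null set: the
finite unions of members form a directed family, so countably many of them exhaust the measure. -/
lemma exists_countable_cover {X : Type*} [TopologicalSpace X] [MeasurableSpace X] [BorelSpace X]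
    {μ : Measure X} [IsFiniteMeasure μ] (hμ : TauAdditive μ) (G : Set (Set X))
    (hG : ∀ U ∈ G, IsOpen U) :
    ∃ T ⊆ G, T.Countable ∧ μ (⋃₀ G \ ⋃₀ T) = 0 := by
  let I := {F : Set (Set X) // F.Finite ∧ F ⊆ G}
  have : Nonempty I := ⟨⟨∅, Set.finite_empty, Set.empty_subset _⟩⟩
  have key : μ (⋃₀ G) = ⨆ F : I, μ (⋃₀ F.1) := by
    have h := hμ (Set.range fun F : I => ⋃₀ F.1) (Set.range_nonempty _) ?_ ?_
    · rw [iSup_range] at h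
      rw [← h]
      congr 1
      ext x
      constructor
      · rintro ⟨U, hU, hx⟩
        exact ⟨U, ⟨⟨{U}, Set.finite_singleton _, by simpa using hU⟩, by simp⟩, hx⟩
      · rintro ⟨_, ⟨F, rfl⟩, U, hU, hx⟩
        exact ⟨U, F.2.2 hU, hx⟩
    · rintro _ ⟨F, rfl⟩
      exact isOpen_sUnion fun U hU => hG U (F.2.2 hU)
    · rintro _ ⟨F, rfl⟩ _ ⟨F', rfl⟩
      exact ⟨_, ⟨⟨F.1 ∪ F'.1, F.2.1.union F'.2.1, Set.union_subset F.2.2 F'.2.2⟩, rfl⟩,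
        Set.sUnion_subset_sUnion Set.subset_union_left,
        Set.sUnion_subset_sUnion Set.subset_union_right⟩
  obtain ⟨u, -, hu, hmem⟩ := exists_seq_tendsto_sSup
    (Set.range_nonempty fun F : I => μ (⋃₀ F.1)) (OrderTop.bddAbove _)
  choose F hF using hmem
  have hsub : (⋃ n, (F n).1) ⊆ G := Set.iUnion_subset fun n => (F n).2.2
  refine ⟨⋃ n, (F n).1, hsub, Set.countable_iUnion fun n => (F n).2.1.countable, ?_⟩
  rw [measure_sdiff (Set.sUnion_subset_sUnion hsub)
    (isOpen_sUnion fun U hU => hG U (hsub hU)).measurableSet.nullMeasurableSet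
    (measure_ne_top _ _), tsub_eq_zero_iff_le, key]
  refine le_of_tendsto' hu fun n => ?_
  rw [← hF n]
  exact measure_mono (Set.sUnion_subset_sUnion (Set.subset_iUnion (fun n => (F n).1) n))

variable {X Y : Type*} [TopologicalSpace X] [TopologicalSpace Y] [MeasurableSpace Y]

lemma exists_rectangle {ν : Measure Y} (hν : TauAdditive ν) {W : Set (X × Y)} (hW : IsOpen W)
    {x : X} {c : ENNReal} (hc : c < ν {y | (x, y) ∈ W}) :
    ∃ U : Set X, IsOpen U ∧ x ∈ U ∧ ∃ V : Set Y, IsOpen V ∧ U ×ˢ V ⊆ W ∧ c < ν V := by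
  have h := hν {V | IsOpen V ∧ ∃ U : Set X, IsOpen U ∧ x ∈ U ∧ U ×ˢ V ⊆ W}
    ⟨∅, isOpen_empty, Set.univ, isOpen_univ, trivial, by simp⟩ (fun _ hV => hV.1) ?_
  · have hU : ⋃₀ {V | IsOpen V ∧ ∃ U : Set X, IsOpen U ∧ x ∈ U ∧ U ×ˢ V ⊆ W}
        = {y | (x, y) ∈ W} := by
      ext y
      constructor
      · rintro ⟨V, ⟨-, U, -, hx, hUV⟩, hy⟩
        exact hUV ⟨hx, hy⟩
      · intro hy
        obtain ⟨U, V, hU, hV, hxU, hyV, hUV⟩ := isOpen_prod_iff.1 hW x y hy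
        exact ⟨V, ⟨hV, U, hU, hxU, hUV⟩, hyV⟩
    rw [hU] at h
    rw [h] at hc
    simp only [lt_iSup_iff] at hc
    obtain ⟨V, ⟨hV, U, hU, hx, hUV⟩, hcV⟩ := hc
    exact ⟨U, hU, hx, V, hV, hUV, hcV⟩
  · rintro V ⟨hV, U, hU, hx, hUV⟩ V' ⟨hV', U', hU', hx', hUV'⟩
    refine ⟨V ∪ V', ⟨hV.union hV', U ∩ U', hU.inter hU', ⟨hx, hx'⟩, ?_⟩,
      Set.subset_union_left, Set.subset_union_right⟩
    rintro ⟨a, b⟩ ⟨⟨ha, ha'⟩, hb | hb⟩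
    · exact hUV ⟨ha, hb⟩
    · exact hUV' ⟨ha', hb⟩

lemma lowerSemicontinuous_section {ν : Measure Y} (hν : TauAdditive ν) {W : Set (X × Y)}
    (hW : IsOpen W) : LowerSemicontinuous fun x => ν {y | (x, y) ∈ W} := by
  intro x c hc
  obtain ⟨U, hU, hx, V, -, hUV, hcV⟩ := exists_rectangle hν hW hc
  filter_upwards [hU.mem_nhds hx] with x' hx'
  exact hcV.trans_le (measure_mono fun y hy => hUV ⟨hx', hy⟩)

variable [MeasurableSpace X] [BorelSpace X] [BorelSpace Y]

/-- An open set contains a set measurable for the product σ-algebra, namely a countable union of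
open rectangles, whose `x`-sections are as large for almost every `x`. -/
lemma exists_measurable_subset {μ : Measure X} [IsFiniteMeasure μ] (hμ : TauAdditive μ)
    {ν : Measure Y} (hν : TauAdditive ν) {W : Set (X × Y)} (hW : IsOpen W) :
    ∃ R ⊆ W, MeasurableSet R ∧ ∀ᵐ x ∂μ, ν {y | (x, y) ∈ W} ≤ ν {y | (x, y) ∈ R} := by
  let c : ℚ → ENNReal := fun q => (Real.toNNReal q : ENNReal)
  let G : ℚ → Set (Set X) := fun q =>
    {U | IsOpen U ∧ ∃ V : Set Y, IsOpen V ∧ U ×ˢ V ⊆ W ∧ c q < ν V}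
  choose T hTG hTc hT using fun q => exists_countable_cover hμ (G q) fun U hU => hU.1
  have hV : ∀ q, ∀ U ∈ T q, ∃ V : Set Y, IsOpen V ∧ U ×ˢ V ⊆ W ∧ c q < ν V :=
    fun q U hU => (hTG q hU).2
  choose! V hVo hVW hVc using hV
  refine ⟨⋃ q, ⋃ U ∈ T q, U ×ˢ V q U,
    Set.iUnion_subset fun q => Set.iUnion₂_subset fun U hU => hVW q U hU,
    MeasurableSet.iUnion fun q => MeasurableSet.biUnion (hTc q) fun U hU =>
      (hTG q hU).1.measurableSet.prod (hVo q U hU).measurableSet, ?_⟩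
  have hae : ∀ᵐ x ∂μ, ∀ q, x ∉ ⋃₀ G q \ ⋃₀ T q :=
    ae_all_iff.2 fun q => measure_eq_zero_iff_ae_notMem.1 (hT q)
  filter_upwards [hae] with x hx
  by_contra! hlt
  obtain ⟨q, -, hq1, hq2⟩ := ENNReal.lt_iff_exists_rat_btwn.1 hlt
  obtain ⟨U, hU, hxU, V', hV', hUV', hcV'⟩ := exists_rectangle hν hW hq2
  have hxT : x ∈ ⋃₀ T q := by
    by_contra hn
    exact hx q ⟨⟨U, ⟨hU, V', hV', hUV', hcV'⟩, hxU⟩, hn⟩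
  obtain ⟨U₁, hU₁, hxU₁⟩ := hxT
  refine lt_irrefl _ ((hq1.trans (hVc q U₁ hU₁)).trans_le (measure_mono fun y hy => ?_))
  simp only [Set.mem_ofPred_eq, Set.mem_iUnion]
  exact ⟨q, U₁, hU₁, hxU₁, hy⟩

lemma lintegral_section_eq_of_isOpen {μ : Measure X} [IsFiniteMeasure μ] (hμ : TauAdditive μ)
    {ν : Measure Y} [IsFiniteMeasure ν] (hν : TauAdditive ν) {W : Set (X × Y)} (hW : IsOpen W) :
    ∫⁻ x, ν {y | (x, y) ∈ W} ∂μ = ∫⁻ y, μ {x | (x, y) ∈ W} ∂ν := by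
  obtain ⟨R₁, hR₁W, hR₁, h₁⟩ := exists_measurable_subset hμ hν hW
  obtain ⟨R₂, hR₂W, hR₂, h₂⟩ :=
    exists_measurable_subset hν hμ (hW.preimage (continuous_swap (X := Y) (Y := X)))
  let R := R₁ ∪ Prod.swap ⁻¹' R₂
  have hR : MeasurableSet R := hR₁.union (measurable_swap hR₂)
  have hRW : R ⊆ W := Set.union_subset hR₁W fun p hp => hR₂W hp
  have e₁ : ∫⁻ x, ν {y | (x, y) ∈ W} ∂μ = ∫⁻ x, ν {y | (x, y) ∈ R} ∂μ := by
    refine lintegral_congr_ae ?_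
    filter_upwards [h₁] with x hx
    exact le_antisymm (hx.trans (measure_mono fun y hy => Or.inl hy))
      (measure_mono fun y hy => hRW hy)
  have e₂ : ∫⁻ y, μ {x | (x, y) ∈ W} ∂ν = ∫⁻ y, μ {x | (x, y) ∈ R} ∂ν := by
    refine lintegral_congr_ae ?_
    filter_upwards [h₂] with y hy
    exact le_antisymm (hy.trans (measure_mono fun x hx => Or.inr hx))
      (measure_mono fun x hx => hRW hx)
  rw [e₁, e₂]
  exact (Measure.prod_apply hR).symm.trans (Measure.prod_apply_symm hR)

end TauAdditive


/-- Fubini-type theorem for τ-additive Borel probability measures on regular spaces: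
for every set `W` that is Borel with respect to the product *topology* on `X × Y`, the
maps `x ↦ ν W_x` and `y ↦ μ W^y` are Borel measurable and the two iterated integrals
agree. -/
theorem tauAdditive_fubini {X Y : Type*}
    [TopologicalSpace X] [RegularSpace X] [MeasurableSpace X] [BorelSpace X]
    [TopologicalSpace Y] [RegularSpace Y] [MeasurableSpace Y] [BorelSpace Y]
    (μ : Measure X) [IsProbabilityMeasure μ] (hμ : TauAdditive μ)
    (ν : Measure Y) [IsProbabilityMeasure ν] (hν : TauAdditive ν)
    (W : Set (X × Y)) (hW : MeasurableSet[borel (X × Y)] W) :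
    (Measurable fun x : X => ν {y : Y | (x, y) ∈ W}) ∧
    (Measurable fun y : Y => μ {x : X | (x, y) ∈ W}) ∧
    ∫⁻ x, ν {y : Y | (x, y) ∈ W} ∂μ = ∫⁻ y, μ {x : X | (x, y) ∈ W} ∂ν := by
  -- Sections of Borel sets are Borel because `y ↦ (x, y)` is continuous.
  have sec₁ : ∀ {S : Set (X × Y)}, MeasurableSet[borel (X × Y)] S →
      ∀ x, MeasurableSet {y | (x, y) ∈ S} := by
    intro S hS x
    let _ : MeasurableSpace (X × Y) := borel (X × Y)
    have : BorelSpace (X × Y) := ⟨rfl⟩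
    exact (Continuous.prodMk_right x).measurable hS
  have sec₂ : ∀ {S : Set (X × Y)}, MeasurableSet[borel (X × Y)] S →
      ∀ y, MeasurableSet {x | (x, y) ∈ S} := by
    intro S hS y
    let _ : MeasurableSpace (X × Y) := borel (X × Y)
    have : BorelSpace (X × Y) := ⟨rfl⟩
    exact (Continuous.prodMk_left y).measurable hS
  induction W, hW using MeasurableSpace.induction_on_inter (m := borel (X × Y))
    (s := {S | IsOpen S}) rfl isPiSystem_isOpen with
  | empty => simp
  | basic S hS =>
    exact ⟨(TauAdditive.lowerSemicontinuous_section hν hS).measurable,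
      (TauAdditive.lowerSemicontinuous_section hμ
        (IsOpen.preimage (continuous_swap (X := Y) (Y := X)) hS)).measurable,
      TauAdditive.lintegral_section_eq_of_isOpen hμ hν hS⟩
  | compl S hS ih =>
    obtain ⟨m₁, m₂, h⟩ := ih
    have c₁ : ∀ x, ν {y | (x, y) ∈ Sᶜ} = 1 - ν {y | (x, y) ∈ S} :=
      fun x => prob_compl_eq_one_sub (sec₁ hS x)
    have c₂ : ∀ y, μ {x | (x, y) ∈ Sᶜ} = 1 - μ {x | (x, y) ∈ S} :=
      fun y => prob_compl_eq_one_sub (sec₂ hS y)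
    simp only [c₁, c₂]
    refine ⟨m₁.const_sub _, m₂.const_sub _, ?_⟩
    have f₁ : ∫⁻ x, ν {y | (x, y) ∈ S} ∂μ ≠ ⊤ :=
      ((lintegral_mono fun x => prob_le_one).trans_lt (by simp)).ne
    rw [lintegral_sub m₁ f₁ (.of_forall fun x => prob_le_one),
      lintegral_sub m₂ (h ▸ f₁) (.of_forall fun y => prob_le_one), h]
    simp
  | iUnion S hd hS ih =>
    have c₁ : ∀ x, ν {y | (x, y) ∈ ⋃ n, S n} = ∑' n, ν {y | (x, y) ∈ S n} := by
      intro x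
      simp only [Set.mem_iUnion, Set.ofPred_exists]
      exact measure_iUnion (fun i j hij => (hd hij).preimage (Prod.mk x)) fun n => sec₁ (hS n) x
    have c₂ : ∀ y, μ {x | (x, y) ∈ ⋃ n, S n} = ∑' n, μ {x | (x, y) ∈ S n} := by
      intro y
      simp only [Set.mem_iUnion, Set.ofPred_exists]
      exact measure_iUnion (fun i j hij => (hd hij).preimage (fun x => (x, y)))
        fun n => sec₂ (hS n) y
    simp only [c₁, c₂]
    refine ⟨Measurable.tsum fun n => (ih n).1,
      Measurable.tsum fun n => (ih n).2.1, ?_⟩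
    rw [lintegral_tsum fun n => (ih n).1.aemeasurable,
      lintegral_tsum fun n => (ih n).2.1.aemeasurable]
    exact tsum_congr fun n => (ih n).2.2
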